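/- Let G be a finite r-regular graph with girth g, equipped with a random label assignment with probabilities (p₀,p), and let i ≥ 1 with 2i < g−3 and 2(i+2) < g−2. Then the quantities w, b, q, s, t satisfy the recurrences: w_i = w_{i−1}·(1 − p·s_{i−1}/w_{i−1})^r; b_i = b_{i−1}·(1−p)·(1 − r·p·t_{i−1}/((r−1)·b_{i−1}))^{r−1} + r·p·s_{i−1}·(1 − p·s_{i−1}/w_{i−1})^{r−1}; q_i = q_{i−1}·(1 − p·s_{i−1}/w_{i−1})^{2r−2}; s_i = s_{i−1}·(1−p)·(1 − p·s_{i−1}/w_{i−1})^{r−1}·(1 − r·p·t_{i−1}/((r−1)·b_{i−1}))^{r−2} + ((r−1)·p·q_{i−1}·s_{i−1}/w_{i−1})·(1 − p·s_{i−1}/w_{i−1})^{2r−3}; t_i = t_{i−1}·(1−p)²·(1 − r·p·t_{i−1}/((r−1)·b_{i−1}))^{2r−4} + 2·s_{i−1}·(1−p)·(1 − r·p·t_{i−1}/((r−1)·b_{i−1}))^{r−2}·((r−1)·p·s_{i−1}/w_{i−1})·(1 − p·s_{i−1}/w_{i−1})^{r−2} + q_{i−1}·((r−1)²·p²·s_{i−1}²/w_{i−1}²)·(1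 − p·s_{i−1}/w_{i−1})^{2r−4}. -/

import Mathlib

open MeasureTheory ProbabilityTheory Filter Set

namespace InducedForest

variable {V : Type*}

/-- Label `i` is *relevant* for vertex `v` (w.r.t. the label assignment `S`):
either `i = 0` and `0 ∈ S v`, or `i ∈ S v`, no `j < i` is relevant for `v`, and
there is a unique neighbour of `v` having a relevant label strictly smaller than `i`. -/
def Relevant (G : SimpleGraph V) (S : V → Set ℕ) (i : ℕ) : V → Prop :=
  Nat.strongRecOn i (fun i ih v =>
    (i = 0 ∧ 0 ∈ S v) ∨
    (i ∈ S v ∧ (∀ j, (h : j < i) → ¬ ih j h v) ∧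
      (∃! u, G.Adj v u ∧ ∃ j, ∃ h : j < i, ih j h u)))

/-- `v` has some relevant label `≤ l`, i.e. `v ∈ R_{≤ l}`. -/
def RelevantLe (G : SimpleGraph V) (S : V → Set ℕ) (l : ℕ) (v : V) : Prop :=
  ∃ i ≤ l, Relevant G S i v

inductive Colour | white | blue | orange | purple
deriving DecidableEq

open Classical in
/-- The colour of `u` at time `l`. -/
noncomputable def colourAt (G : SimpleGraph V) (S : V → Set ℕ) (l : ℕ) (u : V) : Colour :=
  if RelevantLe G S l u then Colour.purple
  else if ∀ v, G.Adj u v → ¬ RelevantLe G S l v then Colour.white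
  else if ∃! v, G.Adj u v ∧ RelevantLe G S l v then Colour.blue
  else Colour.orange

/-- The set `W_l` of white vertices at time `l`. -/
def White (G : SimpleGraph V) (S : V → Set ℕ) (l : ℕ) : Set V :=
  {u | ¬ RelevantLe G S l u ∧ ∀ v, G.Adj u v → ¬ RelevantLe G S l v}

/-- The set `B_l` of blue vertices at time `l`. -/
def Blue (G : SimpleGraph V) (S : V → Set ℕ) (l : ℕ) : Set V :=
  {u | ¬ RelevantLe G S l u ∧ ∃! v, G.Adj u v ∧ RelevantLe G S l v}
/-- The label assignment determined by a sample point `ω`. -/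
def labels (ω : V → ℕ → Bool) : V → Set ℕ := fun v => {i | ω v i = true}

/-- `μ` is the random label assignment with probabilities `(p₀, p)`: the events
`i ∈ S(v)` are mutually independent, and each has probability `p₀` if `i = 0`
and `p` if `i ≥ 1`. -/
def IsLabelMeasure (μ : Measure (V → ℕ → Bool)) (p₀ p : ℝ) : Prop :=
  IsProbabilityMeasure μ ∧
  iIndepSet (fun q : V × ℕ => {ω : V → ℕ → Bool | ω q.1 q.2 = true}) μ ∧
  ∀ (v : V) (i : ℕ), μ {ω | ω v i = true} = ENNReal.ofReal (if i = 0 then p₀ else p)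

/-- Event that `u` is white at time `l`. -/
def WEv (G : SimpleGraph V) (l : ℕ) (u : V) : Set (V → ℕ → Bool) :=
  {ω | u ∈ White G (labels ω) l}

/-- Event that `u` is blue at time `l`. -/
def BEv (G : SimpleGraph V) (l : ℕ) (u : V) : Set (V → ℕ → Bool) :=
  {ω | u ∈ Blue G (labels ω) l}

/-- Event that `u` has relevant label `i`, i.e. `u ∈ R_i`. -/
def REv (G : SimpleGraph V) (i : ℕ) (u : V) : Set (V → ℕ → Bool) :=
  {ω | Relevant G (labels ω) i u}

/-- Event that `u` has a relevant label `≤ l`, i.e. `u ∈ R_{≤ l}`. -/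
def RLeEv (G : SimpleGraph V) (l : ℕ) (u : V) : Set (V → ℕ → Bool) :=
  {ω | RelevantLe G (labels ω) l u}

/-- `G` is `r`-regular. -/
def IsRegular (G : SimpleGraph V) (r : ℕ) : Prop :=
  ∀ v : V, (G.neighborSet v).ncard = r

/-!
Let every vertex `v` only count the neighbours that point away from a fixed neighbour `u`. The
resulting process at `v` depends on the labels of the branch at `v` pointing away from `u` alone,
and it agrees with the original one as long as `u` is not relevant. The girth condition makes the
branches at the neighbours of a vertex, and the two branches at an edge, disjoint, so events in
different branches are independent. Hence all colour probabilities at time `j` are determined by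
two numbers: the probability `a` that a vertex is not relevant in its branch, and the probability
`c` that a vertex is blue when a single neighbour counts. Passing to time `j + 1` multiplies `a` by
`1 - p * s / w = 1 - r * p * t / ((r - 1) * b)` and changes `c` by an explicit formula, and the
recurrences follow by algebra.
-/

section Combinatorics

variable {G : SimpleGraph V} {S : V → Set ℕ} {N M : Set V} {j : ℕ} {u v x : V}

/-- `v` has a relevant label `≤ j` in the process in which `v` only counts its neighbours in `N`,
and every other vertex only counts its neighbours pointing away from `v`. Restricting what each
vertex sees turns the global process into one that explores `G` along branches. -/
def RelevantVia (G : SimpleGraph V) (S : V → Set ℕ) : ℕ → Set V → V → Prop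
  | 0, _, v => 0 ∈ S v
  | j + 1, N, v => RelevantVia G S j N v ∨
      (j + 1 ∈ S v ∧ ∃! x, x ∈ N ∧ RelevantVia G S j (G.neighborSet x \ {v}) x)

/-- `v` has a relevant label `≤ j` in the branch at `v` pointing away from its neighbour `u`. -/
abbrev BranchRelevant (G : SimpleGraph V) (S : V → Set ℕ) (j : ℕ) (u v : V) : Prop :=
  RelevantVia G S j (G.neighborSet v \ {u}) v

/-- `v` is white at time `j` when it only counts its neighbours in `N`. -/
def WhiteVia (G : SimpleGraph V) (S : V → Set ℕ) (j : ℕ) (N : Set V) (v : V) : Prop :=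
  ¬ RelevantVia G S j N v ∧ ∀ x ∈ N, ¬ BranchRelevant G S j v x

/-- `v` is blue at time `j` when it only counts its neighbours in `N`. -/
def BlueVia (G : SimpleGraph V) (S : V → Set ℕ) (j : ℕ) (N : Set V) (v : V) : Prop :=
  ¬ RelevantVia G S j N v ∧ ∃! x, x ∈ N ∧ BranchRelevant G S j v x

lemma relevantVia_succ_iff :
    RelevantVia G S (j + 1) N v ↔ RelevantVia G S j N v ∨ (BlueVia G S j N v ∧ j + 1 ∈ S v) := by
  simp only [RelevantVia, BlueVia]
  tauto

lemma relevantVia_congr (h : ∀ x, BranchRelevant G S j v x → (x ∈ N ↔ x ∈ M)) :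
    RelevantVia G S j N v ↔ RelevantVia G S j M v := by
  induction j with
  | zero => rfl
  | succ j ih =>
    have hj : ∀ x, BranchRelevant G S j v x → (x ∈ N ↔ x ∈ M) := fun x hx => h x (.inl hx)
    simp only [RelevantVia, ih hj, and_congr_left (hj _)]

lemma relevantVia_empty : RelevantVia G S j ∅ v ↔ 0 ∈ S v := by
  induction j with
  | zero => rfl
  | succ j ih => simp [RelevantVia, ih]

lemma whiteVia_iff :
    WhiteVia G S j N v ↔ 0 ∉ S v ∧ ∀ x ∈ N, ¬ BranchRelevant G S j v x := by
  refine and_congr_left fun hN => not_congr ?_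
  rw [← relevantVia_empty (G := G) (j := j)]
  exact relevantVia_congr fun x hx => iff_of_false (fun hxN => hN x hxN hx) (notMem_empty x)

lemma blueVia_singleton_iff :
    BlueVia G S j {x} v ↔ ¬ RelevantVia G S j {x} v ∧ BranchRelevant G S j v x := by
  simp [BlueVia, ExistsUnique, and_assoc]

lemma blueVia_iff :
    BlueVia G S j N v ↔
      ∃ x ∈ N, BlueVia G S j {x} v ∧ ∀ y ∈ N \ {x}, ¬ BranchRelevant G S j v y := by
  have relevantVia_iff_singleton {x : V} (hx : x ∈ N)
      (hN : ∀ y ∈ N \ {x}, ¬ BranchRelevant G S j v y) :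
      RelevantVia G S j N v ↔ RelevantVia G S j {x} v :=
    relevantVia_congr fun y hy =>
      ⟨fun hyN => by_contra fun hyx => hN y ⟨hyN, hyx⟩ hy, fun hyx => hyx ▸ hx⟩
  constructor
  · rintro ⟨hv, x, ⟨hx, hxrel⟩, huniq⟩
    have hN : ∀ y ∈ N \ {x}, ¬ BranchRelevant G S j v y :=
      fun y hy hyrel => hy.2 (huniq y ⟨hy.1, hyrel⟩)
    exact ⟨x, hx, blueVia_singleton_iff.2
      ⟨mt (relevantVia_iff_singleton hx hN).2 hv, hxrel⟩, hN⟩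
  · rintro ⟨x, hx, hblue, hN⟩
    obtain ⟨hv, hxrel⟩ := blueVia_singleton_iff.1 hblue
    exact ⟨mt (relevantVia_iff_singleton hx hN).1 hv, x, ⟨hx, hxrel⟩,
      fun y hy => by_contra fun hyx => hN y ⟨hy.1, hyx⟩ hy.2⟩

lemma blueVia_singleton_zero_iff : BlueVia G S 0 {x} v ↔ 0 ∉ S v ∧ 0 ∈ S x :=
  blueVia_singleton_iff

lemma blueVia_singleton_succ_iff :
    BlueVia G S (j + 1) {x} v ↔ (BlueVia G S j {x} v ∧ j + 1 ∉ S v) ∨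
      (0 ∉ S v ∧ BlueVia G S j (G.neighborSet x \ {v}) x ∧ j + 1 ∈ S x) := by
  by_cases hx : BranchRelevant G S j v x
  · have : ¬ BlueVia G S j (G.neighborSet x \ {v}) x := fun h => h.1 hx
    simp only [blueVia_singleton_iff, relevantVia_succ_iff (v := v), relevantVia_succ_iff (v := x)]
    tauto
  · have : RelevantVia G S j {x} v ↔ 0 ∈ S v := by
      rw [← relevantVia_empty (G := G) (j := j)]
      refine relevantVia_congr fun y hy => iff_of_false ?_ (notMem_empty y)
      rintro rfl
      exact hx hy
    simp only [blueVia_singleton_iff, relevantVia_succ_iff (v := v), relevantVia_succ_iff (v := x)]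
    tauto

lemma relevant_iff {i : ℕ} :
    Relevant G S i v ↔ (i = 0 ∧ 0 ∈ S v) ∨
      (i ∈ S v ∧ (∀ k < i, ¬ Relevant G S k v) ∧
        ∃! u, G.Adj v u ∧ ∃ k, ∃ _ : k < i, Relevant G S k u) := by
  unfold Relevant
  rw [Nat.strongRecOn_eq]

lemma relevantLe_zero_iff : RelevantLe G S 0 v ↔ 0 ∈ S v := by
  simp [RelevantLe, relevant_iff (i := 0)]

lemma relevantLe_succ_iff :
    RelevantLe G S (j + 1) v ↔ RelevantLe G S j v ∨
      (j + 1 ∈ S v ∧ ∃! x, G.Adj v x ∧ RelevantLe G S j x) := by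
  have hlt : ∀ x, (∃ k, ∃ _ : k < j + 1, Relevant G S k x) ↔ RelevantLe G S j x := by
    simp [RelevantLe]
  have hsplit : RelevantLe G S (j + 1) v ↔ RelevantLe G S j v ∨ Relevant G S (j + 1) v := by
    simp only [RelevantLe, Nat.le_succ_iff, or_and_right, exists_or, exists_eq_left]
  have hnone : (∀ k < j + 1, ¬ Relevant G S k v) ↔ ¬ RelevantLe G S j v := by
    simp [RelevantLe]
  simp only [hsplit, relevant_iff (i := j + 1), hlt, hnone, Nat.succ_ne_zero, false_and, false_or]
  tauto

lemma relevantLe_iff_relevantVia (hN : N ⊆ G.neighborSet v)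
    (h : ∀ x, G.Adj v x → RelevantLe G S j x → x ∈ N) :
    RelevantLe G S j v ↔ RelevantVia G S j N v := by
  induction j generalizing N v with
  | zero => exact relevantLe_zero_iff
  | succ j ih =>
    have hj : ∀ x, G.Adj v x → RelevantLe G S j x → x ∈ N :=
      fun x hx hxrel => h x hx (relevantLe_succ_iff.2 (.inl hxrel))
    rw [relevantLe_succ_iff, RelevantVia, ← ih hN hj]
    refine or_congr_right' fun hv => and_congr_right fun _ => existsUnique_congr fun x => ?_
    have hbranch : RelevantLe G S j x ↔ BranchRelevant G S j v x :=
      ih sdiff_subset fun y hxy hy => ⟨hxy, fun hyv => hv (hyv ▸ hy)⟩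
    exact ⟨fun hx => ⟨hj x hx.1 hx.2, hbranch.1 hx.2⟩,
      fun hx => ⟨hN hx.1, hbranch.2 hx.2⟩⟩

lemma relevantLe_iff_branchRelevant (hu : ¬ RelevantLe G S j u) :
    RelevantLe G S j v ↔ BranchRelevant G S j u v :=
  relevantLe_iff_relevantVia sdiff_subset fun _ hx hxrel => ⟨hx, fun hxu => hu (hxu ▸ hxrel)⟩

lemma mem_white_iff_whiteVia (hN : N ⊆ G.neighborSet v)
    (h : ∀ x, G.Adj v x → RelevantLe G S j x → x ∈ N) :
    v ∈ White G S j ↔ WhiteVia G S j N v := by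
  rw [WhiteVia, ← relevantLe_iff_relevantVia hN h]
  refine and_congr_right fun hv => ?_
  simp only [← relevantLe_iff_branchRelevant hv]
  exact ⟨fun hx x hxN => hx x (hN hxN), fun hx x hvx hxrel => hx x (h x hvx hxrel) hxrel⟩

lemma mem_blue_iff_blueVia (hN : N ⊆ G.neighborSet v)
    (h : ∀ x, G.Adj v x → RelevantLe G S j x → x ∈ N) :
    v ∈ Blue G S j ↔ BlueVia G S j N v := by
  rw [BlueVia, ← relevantLe_iff_relevantVia hN h]
  refine and_congr_right fun hv => existsUnique_congr fun x => ?_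
  rw [← relevantLe_iff_branchRelevant hv]
  exact and_congr_left fun hxrel => ⟨fun hvx => h x hvx hxrel, fun hxN => hN hxN⟩

lemma mem_white_iff_of_not_relevantLe (hu : ¬ RelevantLe G S j u) :
    v ∈ White G S j ↔ WhiteVia G S j (G.neighborSet v \ {u}) v :=
  mem_white_iff_whiteVia sdiff_subset fun _ hx hxrel => ⟨hx, fun hxu => hu (hxu ▸ hxrel)⟩

lemma mem_blue_iff_of_not_relevantLe (hu : ¬ RelevantLe G S j u) :
    v ∈ Blue G S j ↔ BlueVia G S j (G.neighborSet v \ {u}) v :=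
  mem_blue_iff_blueVia sdiff_subset fun _ hx hxrel => ⟨hx, fun hxu => hu (hxu ▸ hxrel)⟩

lemma not_relevantLe_of_not_branchRelevant (huv : ¬ BranchRelevant G S j u v)
    (hvu : ¬ BranchRelevant G S j v u) : ¬ RelevantLe G S j v := by
  rw [relevantLe_iff_relevantVia subset_rfl fun _ hx _ => hx]
  rwa [relevantVia_congr (M := G.neighborSet v \ {u}) fun x hx => ?_]
  exact ⟨fun hxv => ⟨hxv, fun hxu => hvu (hxu ▸ hx)⟩, fun hxv => hxv.1⟩

lemma white_and_white_iff :
    u ∈ White G S j ∧ v ∈ White G S j ↔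
      WhiteVia G S j (G.neighborSet u \ {v}) u ∧ WhiteVia G S j (G.neighborSet v \ {u}) v := by
  constructor
  · rintro ⟨hu, hv⟩
    exact ⟨(mem_white_iff_of_not_relevantLe hv.1).1 hu, (mem_white_iff_of_not_relevantLe hu.1).1 hv⟩
  · rintro ⟨hu, hv⟩
    exact ⟨(mem_white_iff_of_not_relevantLe (not_relevantLe_of_not_branchRelevant hv.1 hu.1)).2 hu,
      (mem_white_iff_of_not_relevantLe (not_relevantLe_of_not_branchRelevant hu.1 hv.1)).2 hv⟩

lemma blue_and_white_iff :
    u ∈ Blue G S j ∧ v ∈ White G S j ↔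
      BlueVia G S j (G.neighborSet u \ {v}) u ∧ WhiteVia G S j (G.neighborSet v \ {u}) v := by
  constructor
  · rintro ⟨hu, hv⟩
    exact ⟨(mem_blue_iff_of_not_relevantLe hv.1).1 hu, (mem_white_iff_of_not_relevantLe hu.1).1 hv⟩
  · rintro ⟨hu, hv⟩
    exact ⟨(mem_blue_iff_of_not_relevantLe (not_relevantLe_of_not_branchRelevant hv.1 hu.1)).2 hu,
      (mem_white_iff_of_not_relevantLe (not_relevantLe_of_not_branchRelevant hu.1 hv.1)).2 hv⟩

lemma blue_and_blue_iff :
    u ∈ Blue G S j ∧ v ∈ Blue G S j ↔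
      BlueVia G S j (G.neighborSet u \ {v}) u ∧ BlueVia G S j (G.neighborSet v \ {u}) v := by
  constructor
  · rintro ⟨hu, hv⟩
    exact ⟨(mem_blue_iff_of_not_relevantLe hv.1).1 hu, (mem_blue_iff_of_not_relevantLe hu.1).1 hv⟩
  · rintro ⟨hu, hv⟩
    exact ⟨(mem_blue_iff_of_not_relevantLe (not_relevantLe_of_not_branchRelevant hv.1 hu.1)).2 hu,
      (mem_blue_iff_of_not_relevantLe (not_relevantLe_of_not_branchRelevant hu.1 hv.1)).2 hv⟩

end Combinatorics

section Branches

variable {G : SimpleGraph V} {j k : ℕ} {u v x y z : V}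

lemma isAcyclic_of_encard_edgeSet_lt_egirth (h : G.edgeSet.encard < G.egirth) :
    G.IsAcyclic := by
  classical
  intro v c hc
  refine h.not_ge ((SimpleGraph.egirth_le_length hc).trans ?_)
  rw [← c.length_edges, ← List.toFinset_card_of_nodup hc.edges_nodup,
    ← encard_coe_eq_coe_finsetCard]
  exact encard_le_encard fun e he => c.edges_subset_edgeSet (List.mem_toFinset.1 he)

/- Both walks live in the subgraph formed by their edges, which has too few edges to contain a
cycle of `G`; in a forest, non-backtracking walks are paths, and these are unique. -/
lemma walk_eq_of_isChain_edges {p q : G.Walk u v} (hp : p.edges.IsChain (· ≠ ·))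
    (hq : q.edges.IsChain (· ≠ ·)) (h : ((p.length + q.length : ℕ) : ℕ∞) < G.egirth) :
    p = q := by
  classical
  set E : Finset (Sym2 V) := (p.edges ++ q.edges).toFinset with hE
  have hEG : (E : Set (Sym2 V)) ⊆ G.edgeSet := fun e he => by
    rcases List.mem_append.1 (List.mem_toFinset.1 he) with he | he
    exacts [p.edges_subset_edgeSet he, q.edges_subset_edgeSet he]
  set H : SimpleGraph V := SimpleGraph.fromEdgeSet E
  have hHE : H.edgeSet = E := by
    rw [SimpleGraph.edgeSet_fromEdgeSet, sdiff_eq_left]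
    exact disjoint_left.2 fun e he => G.not_isDiag_of_mem_edgeSet (hEG he)
  have hac : H.IsAcyclic := by
    refine isAcyclic_of_encard_edgeSet_lt_egirth (lt_of_le_of_lt ?_ (h.trans_le
      (SimpleGraph.egirth_anti (SimpleGraph.edgeSet_subset_edgeSet.1 (hHE.trans_subset hEG)))))
    rw [hHE, encard_coe_eq_coe_finsetCard, Nat.cast_le]
    simpa [hE] using List.toFinset_card_le (p.edges ++ q.edges)
  have hpH : ∀ e ∈ p.edges, e ∈ H.edgeSet := fun e he => by simp [hHE, hE, he]
  have hqH : ∀ e ∈ q.edges, e ∈ H.edgeSet := fun e he => by simp [hHE, hE, he]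
  have hpath : p.transfer H hpH = q.transfer H hqH := congrArg Subtype.val <|
    (hac.subsingleton_path u v).elim
      ⟨_, (hac.isPath_iff_isChain _).2 ((p.edges_transfer hpH).symm ▸ hp)⟩
      ⟨_, (hac.isPath_iff_isChain _).2 ((q.edges_transfer hqH).symm ▸ hq)⟩
  apply SimpleGraph.Walk.ext_support
  rw [← p.support_transfer hpH, ← q.support_transfer hqH, hpath]

/-- The vertices whose labels determine `RelevantVia G S j N v`. -/
def explored (G : SimpleGraph V) : ℕ → Set V → V → Set V
  | 0, _, v => {v}
  | j + 1, N, v => {v} ∪ ⋃ x ∈ N, explored G j (G.neighborSet x \ {v}) x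

/-- The vertices reached from `v` in at most `j` steps pointing away from its neighbour `u`. -/
abbrev branch (G : SimpleGraph V) (j : ℕ) (u v : V) : Set V :=
  explored G j (G.neighborSet v \ {u}) v

lemma mem_explored_self {N : Set V} : v ∈ explored G j N v := by
  cases j with
  | zero => exact mem_singleton v
  | succ j => exact .inl (mem_singleton v)

lemma branch_subset_explored_succ {N : Set V} (hx : x ∈ N) :
    branch G j v x ⊆ explored G (j + 1) N v :=
  (subset_biUnion_of_mem (u := fun x => branch G j v x) hx).trans subset_union_right

lemma explored_subset_explored_succ {N : Set V} : explored G j N v ⊆ explored G (j + 1) N v := by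
  induction j generalizing N v with
  | zero => exact subset_union_left
  | succ j ih => exact union_subset_union_right _ (iUnion₂_mono fun x _ => ih)

lemma exists_walk_of_mem_branch (huv : G.Adj u v) (hz : z ∈ branch G j u v) :
    ∃ p : G.Walk v z, (p.cons huv).edges.IsChain (· ≠ ·) ∧ p.length ≤ j := by
  induction j generalizing u v with
  | zero =>
    obtain rfl : z = v := hz
    exact ⟨.nil, by simp, le_rfl⟩
  | succ j ih =>
    rcases hz with rfl | hz
    · exact ⟨.nil, by simp, by simp⟩
    · obtain ⟨x, ⟨hx, hxu⟩, hzx⟩ := mem_iUnion₂.1 hz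
      have hvx : G.Adj v x := hx
      obtain ⟨p, hp, hlen⟩ := ih hvx hzx
      refine ⟨p.cons hvx, ?_, by simpa using hlen⟩
      rw [SimpleGraph.Walk.edges_cons, SimpleGraph.Walk.edges_cons, List.isChain_cons_cons]
      refine ⟨fun he => ?_, by simpa using hp⟩
      rcases Sym2.eq_iff.1 he with ⟨huv', -⟩ | ⟨hux, -⟩
      exacts [huv.ne huv', hxu hux.symm]

lemma disjoint_branch_of_ne (hvx : G.Adj v x) (hvy : G.Adj v y) (hxy : x ≠ y)
    (hg : ((2 * j + 2 : ℕ) : ℕ∞) < G.egirth) : Disjoint (branch G j v x) (branch G j v y) := by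
  refine disjoint_left.2 fun z hzx hzy => hxy ?_
  obtain ⟨p, hp, hplen⟩ := exists_walk_of_mem_branch hvx hzx
  obtain ⟨q, hq, hqlen⟩ := exists_walk_of_mem_branch hvy hzy
  have hlen : (p.cons hvx).length + (q.cons hvy).length ≤ 2 * j + 2 := by
    simp only [SimpleGraph.Walk.length_cons]; lia
  have heq := walk_eq_of_isChain_edges hp hq ((Nat.cast_le.2 hlen).trans_lt hg)
  exact (SimpleGraph.Walk.cons.inj heq).1

lemma disjoint_branch_symm (huv : G.Adj u v) (hg : ((j + k + 1 : ℕ) : ℕ∞) < G.egirth) :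
    Disjoint (branch G j v u) (branch G k u v) := by
  refine disjoint_left.2 fun z hzu hzv => ?_
  obtain ⟨p, hp, hplen⟩ := exists_walk_of_mem_branch huv.symm hzu
  obtain ⟨q, hq, hqlen⟩ := exists_walk_of_mem_branch huv hzv
  have hlen : p.length + (q.cons huv).length ≤ j + k + 1 := by
    simp only [SimpleGraph.Walk.length_cons]; lia
  have heq : p = q.cons huv := walk_eq_of_isChain_edges (List.IsChain.tail hp) hq
    ((Nat.cast_le.2 hlen).trans_lt hg)
  subst heq
  rw [SimpleGraph.Walk.edges_cons, SimpleGraph.Walk.edges_cons, List.isChain_cons_cons] at hp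
  exact hp.1 Sym2.eq_swap

lemma notMem_branch (hvx : G.Adj v x) (hg : ((j + 1 : ℕ) : ℕ∞) < G.egirth) :
    v ∉ branch G j v x :=
  disjoint_singleton_left.1 (disjoint_branch_symm (j := 0) hvx (by simpa using hg))

end Branches

section LabelAlgebra

variable {A B : Set (V × ℕ)} {q : V × ℕ} {v : V} {k : ℕ}

/-- The event `q.2 ∈ S(q.1)`. -/
def labelEvent (q : V × ℕ) : Set (V → ℕ → Bool) := {ω | q.2 ∈ labels ω q.1}

/-- The σ-algebra generated by the events `k ∈ S(v)` with `(v, k) ∈ A`. An event measurable for it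
only depends on the labels in `A`. -/
abbrev labelAlgebra (A : Set (V × ℕ)) : MeasurableSpace (V → ℕ → Bool) :=
  MeasurableSpace.generateFrom {t | ∃ q ∈ A, labelEvent q = t}

lemma measurableSet_labelEvent : MeasurableSet (labelEvent q) :=
  have h : Measurable fun ω : V → ℕ → Bool => ω q.1 q.2 := by fun_prop
  h (measurableSet_singleton true)

lemma labelAlgebra_le : labelAlgebra A ≤ MeasurableSpace.pi :=
  MeasurableSpace.generateFrom_le <| by
    rintro _ ⟨q, -, rfl⟩
    exact measurableSet_labelEvent

lemma labelAlgebra_mono (h : A ⊆ B) : labelAlgebra A ≤ labelAlgebra B :=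
  MeasurableSpace.generateFrom_mono fun _ ⟨q, hq, hqt⟩ => ⟨q, h hq, hqt⟩

lemma measurableSet_labelEvent_labelAlgebra (hq : q ∈ A) :
    MeasurableSet[labelAlgebra A] (labelEvent q) :=
  MeasurableSpace.measurableSet_generateFrom ⟨q, hq, rfl⟩

lemma measurableSet_labelEvent_singleton : MeasurableSet[labelAlgebra {q}] (labelEvent q) :=
  measurableSet_labelEvent_labelAlgebra (mem_singleton q)

namespace IsLabelMeasure

variable {μ : Measure (V → ℕ → Bool)} {p₀ p : ℝ}

lemma real_inter (hμ : IsLabelMeasure μ p₀ p) (hAB : Disjoint A B) {X Y : Set (V → ℕ → Bool)}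
    (hX : MeasurableSet[labelAlgebra A] X) (hY : MeasurableSet[labelAlgebra B] Y) :
    μ.real (X ∩ Y) = μ.real X * μ.real Y := by
  have hindep : Indep (labelAlgebra A) (labelAlgebra B) μ :=
    iIndepSet.indep_generateFrom_of_disjoint (fun _ => measurableSet_labelEvent) hμ.2.1 A B hAB
  rw [measureReal_def, (Indep_iff _ _ _).1 hindep X Y hX hY, ENNReal.toReal_mul, measureReal_def,
    measureReal_def]

lemma real_biInter (hμ : IsLabelMeasure μ p₀ p) {ι : Type*} {s : Finset ι}
    {A : ι → Set (V × ℕ)} (hA : (s : Set ι).PairwiseDisjoint A) {X : ι → Set (V → ℕ → Bool)}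
    (hX : ∀ i ∈ s, MeasurableSet[labelAlgebra (A i)] (X i)) :
    μ.real (⋂ i ∈ s, X i) = ∏ i ∈ s, μ.real (X i) := by
  classical
  have := hμ.1
  induction s using Finset.induction_on with
  | empty => simp
  | insert i s his ih =>
    rw [Finset.coe_insert, pairwiseDisjoint_insert_of_notMem (by simpa using his)] at hA
    rw [Finset.forall_mem_insert] at hX
    have hXs : MeasurableSet[labelAlgebra (⋃ k ∈ s, A k)] (⋂ k ∈ s, X k) :=
      Finset.measurableSet_biInter _ fun k hk =>
        labelAlgebra_mono (subset_biUnion_of_mem (u := A) hk) _ (hX.2 k hk)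
    rw [Finset.set_biInter_insert, Finset.prod_insert his,
      hμ.real_inter (disjoint_iUnion₂_right.2 hA.2) hX.1 hXs, ih hA.1 hX.2]

lemma real_zero_mem (hμ : IsLabelMeasure μ p₀ p) (hp₀ : 0 ≤ p₀) :
    μ.real {ω | 0 ∈ labels ω v} = p₀ := by
  have h : μ {ω | 0 ∈ labels ω v} = ENNReal.ofReal p₀ := hμ.2.2 v 0
  rw [measureReal_def, h, ENNReal.toReal_ofReal hp₀]

lemma real_succ_mem (hμ : IsLabelMeasure μ p₀ p) (hp : 0 ≤ p) :
    μ.real {ω | k + 1 ∈ labels ω v} = p := by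
  have h : μ {ω | k + 1 ∈ labels ω v} = ENNReal.ofReal p := hμ.2.2 v (k + 1)
  rw [measureReal_def, h, ENNReal.toReal_ofReal hp]

lemma real_zero_notMem (hμ : IsLabelMeasure μ p₀ p) (hp₀ : 0 ≤ p₀) :
    μ.real {ω | 0 ∉ labels ω v} = 1 - p₀ := by
  have := hμ.1
  rw [← hμ.real_zero_mem hp₀ (v := v)]
  exact probReal_compl_eq_one_sub (measurableSet_labelEvent (q := (v, 0)))

lemma real_succ_notMem (hμ : IsLabelMeasure μ p₀ p) (hp : 0 ≤ p) :
    μ.real {ω | k + 1 ∉ labels ω v} = 1 - p := by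
  have := hμ.1
  rw [← hμ.real_succ_mem hp (v := v) (k := k)]
  exact probReal_compl_eq_one_sub (measurableSet_labelEvent (q := (v, k + 1)))

end IsLabelMeasure

lemma measurableSet_existsUnique_mem {Ω : Type*} {m : MeasurableSpace Ω} {N : Set V}
    {Q : V → Ω → Prop} (hN : N.Countable) (hQ : ∀ x ∈ N, MeasurableSet {ω | Q x ω}) :
    MeasurableSet {ω | ∃! x, x ∈ N ∧ Q x ω} := by
  have : {ω | ∃! x, x ∈ N ∧ Q x ω} = ⋃ x ∈ N, ({ω | Q x ω} ∩ ⋂ y ∈ N \ {x}, {ω | Q y ω}ᶜ) := by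
    ext ω
    simp only [ExistsUnique, mem_ofPred_eq, mem_iUnion, mem_inter_iff, mem_iInter, Set.mem_sdiff,
      mem_singleton_iff, mem_compl_iff]
    grind
  rw [this]
  exact .biUnion hN fun x hx => (hQ x hx).inter <|
    .biInter (hN.mono sdiff_subset) fun y hy => (hQ y hy.1).compl

variable {G : SimpleGraph V} [G.LocallyFinite] {N : Set V} {j : ℕ}

lemma measurableSet_relevantVia (hN : N.Countable) :
    MeasurableSet[labelAlgebra (explored G j N v ×ˢ Iic j)]
      {ω | RelevantVia G (labels ω) j N v} := by
  induction j generalizing N v with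
  | zero => exact measurableSet_labelEvent_labelAlgebra (q := (v, 0)) ⟨rfl, mem_Iic.2 le_rfl⟩
  | succ j ih =>
    have hIic : Iic j ⊆ Iic (j + 1) := Iic_subset_Iic.2 j.le_succ
    have hold := labelAlgebra_mono (prod_mono explored_subset_explored_succ hIic) _ (ih hN (v := v))
    have hlabel : MeasurableSet[labelAlgebra (explored G (j + 1) N v ×ˢ Iic (j + 1))]
        (labelEvent (v, j + 1)) :=
      measurableSet_labelEvent_labelAlgebra ⟨mem_explored_self, mem_Iic.2 le_rfl⟩
    refine hold.union (hlabel.inter (measurableSet_existsUnique_mem hN fun x hx => ?_))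
    exact labelAlgebra_mono (prod_mono (branch_subset_explored_succ hx) hIic) _
      (ih (toFinite _).countable)

lemma measurableSet_branchRelevant {u : V} :
    MeasurableSet[labelAlgebra (branch G j u v ×ˢ Iic j)]
      {ω | BranchRelevant G (labels ω) j u v} :=
  measurableSet_relevantVia (toFinite _).countable

lemma measurableSet_forall_not_branchRelevant (hN : N.Countable) :
    MeasurableSet[labelAlgebra ((⋃ x ∈ N, branch G j v x) ×ˢ Iic j)]
      {ω | ∀ x ∈ N, ¬ BranchRelevant G (labels ω) j v x} := by
  have : {ω | ∀ x ∈ N, ¬ BranchRelevant G (labels ω) j v x} =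
      ⋂ x ∈ N, {ω | BranchRelevant G (labels ω) j v x}ᶜ := by
    ext ω
    simp
  rw [this]
  exact .biInter hN fun x hx => (labelAlgebra_mono (prod_mono
    (subset_biUnion_of_mem (u := fun x => branch G j v x) hx) subset_rfl) _
    measurableSet_branchRelevant).compl

lemma measurableSet_whiteVia (hN : N.Countable) :
    MeasurableSet[labelAlgebra (explored G (j + 1) N v ×ˢ Iic j)]
      {ω | WhiteVia G (labels ω) j N v} :=
  (labelAlgebra_mono (prod_mono explored_subset_explored_succ subset_rfl) _
    (measurableSet_relevantVia hN)).compl.inter <|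
  labelAlgebra_mono (prod_mono subset_union_right subset_rfl) _
    (measurableSet_forall_not_branchRelevant hN)

lemma measurableSet_blueVia (hN : N.Countable) :
    MeasurableSet[labelAlgebra (explored G (j + 1) N v ×ˢ Iic j)]
      {ω | BlueVia G (labels ω) j N v} :=
  (labelAlgebra_mono (prod_mono explored_subset_explored_succ subset_rfl) _
    (measurableSet_relevantVia hN)).compl.inter <|
  measurableSet_existsUnique_mem hN fun _ hx =>
    labelAlgebra_mono (prod_mono (branch_subset_explored_succ hx) subset_rfl) _
      measurableSet_branchRelevant

end LabelAlgebra

section BranchProbabilities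

variable {G : SimpleGraph V} {μ : Measure (V → ℕ → Bool)} {p₀ p a c : ℝ} {r j : ℕ}
  {N : Set V} {u v x : V}

/-- The two numbers that determine all colour probabilities at time `j`: for every edge, in either
direction, `a` is the probability that the far endpoint is not relevant in its branch, and `c` is
the probability that the near endpoint is blue when it only counts the far one. -/
structure HasBranchProbs (G : SimpleGraph V) (μ : Measure (V → ℕ → Bool)) (j : ℕ) (a c : ℝ) :
    Prop where
  real_not_branchRelevant {u v : V} :
    G.Adj u v → μ.real {ω | ¬ BranchRelevant G (labels ω) j u v} = a
  real_blueVia_singleton {u v : V} :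
    G.Adj u v → μ.real {ω | BlueVia G (labels ω) j {v} u} = c

/-- The probability that a vertex of an `r`-regular graph is white when it disregards one of its
neighbours. -/
noncomputable def branchWhiteProb (r : ℕ) (p₀ a : ℝ) : ℝ := (1 - p₀) * a ^ (r - 1)

/-- The probability that a vertex of an `r`-regular graph is blue when it disregards one of its
neighbours. -/
noncomputable def branchBlueProb (r : ℕ) (a c : ℝ) : ℝ := (r - 1) * (c * a ^ (r - 2))

lemma disjoint_singleton_iUnion_branch (hN : N ⊆ G.neighborSet v)
    (hg : ((j + 1 : ℕ) : ℕ∞) < G.egirth) : Disjoint {v} (⋃ x ∈ N, branch G j v x) :=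
  disjoint_iUnion₂_right.2 fun _ hx => disjoint_singleton_left.2 (notMem_branch (hN hx) hg)

lemma disjoint_explored_singleton_iUnion_branch (hN : N ⊆ G.neighborSet v) (hvx : G.Adj v x)
    (hg : ((2 * j + 2 : ℕ) : ℕ∞) < G.egirth) :
    Disjoint (explored G (j + 1) {x} v) (⋃ y ∈ N \ {x}, branch G j v y) := by
  have hroot : Disjoint {v} (⋃ y ∈ N \ {x}, branch G j v y) :=
    disjoint_singleton_iUnion_branch (sdiff_subset.trans hN)
      ((Nat.cast_le.2 (by lia)).trans_lt hg)
  have hbranch : Disjoint (branch G j v x) (⋃ y ∈ N \ {x}, branch G j v y) :=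
    disjoint_iUnion₂_right.2 fun y hy =>
      disjoint_branch_of_ne hvx (hN hy.1) (Ne.symm hy.2) hg
  rw [explored, biUnion_singleton]
  exact disjoint_union_left.2 ⟨hroot, hbranch⟩

lemma IsRegular.ncard_neighborSet_sdiff_singleton (hreg : IsRegular G r)
    (huv : G.Adj u v) : (G.neighborSet v \ {u}).ncard = r - 1 := by
  rw [ncard_sdiff_singleton_of_mem (s := G.neighborSet v) huv.symm, hreg v]

lemma IsRegular.pos_of_adj [G.LocallyFinite] (hreg : IsRegular G r) (huv : G.Adj u v) : 0 < r := by
  rw [← hreg u, ncard_pos]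
  exact ⟨v, huv⟩

namespace HasBranchProbs

variable [G.LocallyFinite]

lemma real_forall_not_branchRelevant (h : HasBranchProbs G μ j a c) (hμ : IsLabelMeasure μ p₀ p)
    (hg : ((2 * j + 2 : ℕ) : ℕ∞) < G.egirth) (hN : N ⊆ G.neighborSet v) :
    μ.real {ω | ∀ x ∈ N, ¬ BranchRelevant G (labels ω) j v x} = a ^ N.ncard := by
  lift N to Finset V using (toFinite _).subset hN
  have hdisj : (N : Set V).PairwiseDisjoint fun x => branch G j v x ×ˢ Iic j :=
    fun x hx y hy hxy => (disjoint_branch_of_ne (hN hx) (hN hy) hxy hg).set_prod_left _ _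
  have hinter : {ω | ∀ x ∈ (N : Set V), ¬ BranchRelevant G (labels ω) j v x} =
      ⋂ x ∈ N, {ω | BranchRelevant G (labels ω) j v x}ᶜ := by
    ext ω
    simp
  have hreal : ∀ x ∈ N, μ.real {ω | BranchRelevant G (labels ω) j v x}ᶜ = a :=
    fun x hx => h.real_not_branchRelevant (hN hx)
  rw [hinter, hμ.real_biInter hdisj fun x _ => measurableSet_branchRelevant.compl,
    Finset.prod_eq_pow_card hreal, ncard_coe_finset]

lemma real_whiteVia (h : HasBranchProbs G μ j a c) (hμ : IsLabelMeasure μ p₀ p) (hp₀ : 0 ≤ p₀)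
    (hg : ((2 * j + 2 : ℕ) : ℕ∞) < G.egirth) (hN : N ⊆ G.neighborSet v) :
    μ.real {ω | WhiteVia G (labels ω) j N v} = (1 - p₀) * a ^ N.ncard := by
  have hdisj : Disjoint {(v, 0)} ((⋃ x ∈ N, branch G j v x) ×ˢ Iic j) := by
    rw [← singleton_prod_singleton]
    exact (disjoint_singleton_iUnion_branch hN ((Nat.cast_le.2 (by lia)).trans_lt hg)).set_prod_left
      _ _
  have hinter : {ω | WhiteVia G (labels ω) j N v} =
      (labelEvent (v, 0))ᶜ ∩ {ω | ∀ x ∈ N, ¬ BranchRelevant G (labels ω) j v x} := by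
    ext ω
    exact whiteVia_iff
  rw [hinter, hμ.real_inter hdisj measurableSet_labelEvent_singleton.compl
    (measurableSet_forall_not_branchRelevant ((toFinite _).subset hN).countable),
    h.real_forall_not_branchRelevant hμ hg hN]
  exact congrArg (· * a ^ N.ncard) (hμ.real_zero_notMem hp₀)

lemma real_blueVia (h : HasBranchProbs G μ j a c) (hμ : IsLabelMeasure μ p₀ p)
    (hg : ((2 * j + 2 : ℕ) : ℕ∞) < G.egirth) (hN : N ⊆ G.neighborSet v) :
    μ.real {ω | BlueVia G (labels ω) j N v} = N.ncard * (c * a ^ (N.ncard - 1)) := by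
  have := hμ.1
  lift N to Finset V using (toFinite _).subset hN
  set E : V → Set (V → ℕ → Bool) := fun x => {ω | BlueVia G (labels ω) j {x} v} ∩
    {ω | ∀ y ∈ (N : Set V) \ {x}, ¬ BranchRelevant G (labels ω) j v y} with hE
  have hmeas (x : V) : MeasurableSet[labelAlgebra (explored G (j + 1) {x} v ×ˢ Iic j)]
      {ω | BlueVia G (labels ω) j {x} v} := measurableSet_blueVia (countable_singleton x)
  have hmeas' (x : V) := measurableSet_forall_not_branchRelevant (G := G) (j := j) (v := v)
    ((N.countable_toSet).mono (sdiff_subset (t := {x})))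
  have hunion : {ω | BlueVia G (labels ω) j N v} = ⋃ x ∈ N, E x := by
    ext ω
    simp only [hE, mem_iUnion, exists_prop]
    exact blueVia_iff
  have hdisj : (N : Set V).PairwiseDisjoint E := fun x hx _ _ hxy => disjoint_left.2
    fun ω hωx hωy => hωy.2 x ⟨hx, hxy⟩ (blueVia_singleton_iff.1 hωx.1).2
  have hreal : ∀ x ∈ N, μ.real (E x) = c * a ^ (N.card - 1) := fun x hx => by
    rw [hμ.real_inter ((disjoint_explored_singleton_iUnion_branch hN (hN hx) hg).set_prod_left _ _)
      (hmeas x) (hmeas' x), h.real_blueVia_singleton (hN hx),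
      h.real_forall_not_branchRelevant hμ hg (sdiff_subset.trans hN),
      ncard_sdiff_singleton_of_mem (s := (N : Set V)) hx, ncard_coe_finset]
  rw [hunion, measureReal_biUnion_finset hdisj fun x _ =>
      (labelAlgebra_le _ (hmeas x)).inter (labelAlgebra_le _ (hmeas' x)),
    Finset.sum_eq_card_nsmul hreal, nsmul_eq_mul, ncard_coe_finset]

lemma real_whiteVia_sdiff_singleton (h : HasBranchProbs G μ j a c) (hμ : IsLabelMeasure μ p₀ p)
    (hp₀ : 0 ≤ p₀) (hreg : IsRegular G r) (hg : ((2 * j + 2 : ℕ) : ℕ∞) < G.egirth)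
    (huv : G.Adj u v) :
    μ.real {ω | WhiteVia G (labels ω) j (G.neighborSet v \ {u}) v} = branchWhiteProb r p₀ a := by
  rw [h.real_whiteVia hμ hp₀ hg sdiff_subset, hreg.ncard_neighborSet_sdiff_singleton huv,
    branchWhiteProb]

lemma real_blueVia_sdiff_singleton (h : HasBranchProbs G μ j a c) (hμ : IsLabelMeasure μ p₀ p)
    (hreg : IsRegular G r) (hg : ((2 * j + 2 : ℕ) : ℕ∞) < G.egirth) (huv : G.Adj u v) :
    μ.real {ω | BlueVia G (labels ω) j (G.neighborSet v \ {u}) v} = branchBlueProb r a c := by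
  rw [h.real_blueVia hμ hg sdiff_subset, hreg.ncard_neighborSet_sdiff_singleton huv,
    branchBlueProb, Nat.cast_pred (hreg.pos_of_adj huv), Nat.sub_sub]

end HasBranchProbs

lemma hasBranchProbs_zero (hμ : IsLabelMeasure μ p₀ p) (hp₀ : 0 ≤ p₀) :
    HasBranchProbs G μ 0 (1 - p₀) ((1 - p₀) * p₀) where
  real_not_branchRelevant _ := hμ.real_zero_notMem hp₀
  real_blueVia_singleton {u v} huv := by
    have hinter : {ω | BlueVia G (labels ω) 0 {v} u} =
        (labelEvent (u, 0))ᶜ ∩ labelEvent (v, 0) := by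
      ext ω
      exact blueVia_singleton_zero_iff
    rw [hinter, hμ.real_inter (A := {(u, 0)}) (B := {(v, 0)}) (by simpa using huv.ne)
      measurableSet_labelEvent_singleton.compl measurableSet_labelEvent_singleton]
    exact congrArg₂ (· * ·) (hμ.real_zero_notMem hp₀) (hμ.real_zero_mem hp₀)

namespace HasBranchProbs

variable [G.LocallyFinite]

lemma real_blueVia_inter_labelEvent_succ (h : HasBranchProbs G μ j a c)
    (hμ : IsLabelMeasure μ p₀ p) (hp : 0 ≤ p) (hreg : IsRegular G r)
    (hg : ((2 * j + 2 : ℕ) : ℕ∞) < G.egirth) (huv : G.Adj u v) :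
    μ.real ({ω | BlueVia G (labels ω) j (G.neighborSet v \ {u}) v} ∩ labelEvent (v, j + 1)) =
      p * branchBlueProb r a c := by
  rw [hμ.real_inter (B := {(v, j + 1)}) (by simp) (measurableSet_blueVia (toFinite _).countable)
    measurableSet_labelEvent_singleton, h.real_blueVia_sdiff_singleton hμ hreg hg huv,
    mul_comm]
  exact congrArg (· * branchBlueProb r a c) (hμ.real_succ_mem hp)

lemma real_not_branchRelevant_succ (h : HasBranchProbs G μ j a c)
    (hμ : IsLabelMeasure μ p₀ p) (hp : 0 ≤ p) (hreg : IsRegular G r)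
    (hg : ((2 * j + 2 : ℕ) : ℕ∞) < G.egirth) (huv : G.Adj u v) :
    μ.real {ω | ¬ BranchRelevant G (labels ω) (j + 1) u v} = a - p * branchBlueProb r a c := by
  have := hμ.1
  have hsdiff : {ω | ¬ BranchRelevant G (labels ω) (j + 1) u v} =
      {ω | ¬ BranchRelevant G (labels ω) j u v} \
        ({ω | BlueVia G (labels ω) j (G.neighborSet v \ {u}) v} ∩ labelEvent (v, j + 1)) := by
    ext ω
    exact (not_congr relevantVia_succ_iff).trans not_or
  have hsubset : {ω | BlueVia G (labels ω) j (G.neighborSet v \ {u}) v} ∩ labelEvent (v, j + 1) ⊆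
      {ω | ¬ BranchRelevant G (labels ω) j u v} := fun ω hω => hω.1.1
  rw [hsdiff, measureReal_sdiff hsubset
    ((labelAlgebra_le _ (measurableSet_blueVia (toFinite _).countable)).inter
      measurableSet_labelEvent), h.real_not_branchRelevant huv,
    h.real_blueVia_inter_labelEvent_succ hμ hp hreg hg huv]

lemma real_blueVia_singleton_succ (h : HasBranchProbs G μ j a c)
    (hμ : IsLabelMeasure μ p₀ p) (hp₀ : 0 ≤ p₀) (hp : 0 ≤ p) (hreg : IsRegular G r)
    (hg : ((2 * j + 2 : ℕ) : ℕ∞) < G.egirth) (huv : G.Adj u v) :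
    μ.real {ω | BlueVia G (labels ω) (j + 1) {v} u} =
      c * (1 - p) + (1 - p₀) * (p * branchBlueProb r a c) := by
  have := hμ.1
  set X := {ω | BlueVia G (labels ω) j {v} u}
  set Y := {ω | BlueVia G (labels ω) j (G.neighborSet v \ {u}) v} ∩ labelEvent (v, j + 1)
  have hXmeas : MeasurableSet[labelAlgebra (explored G (j + 1) {v} u ×ˢ Iic j)] X :=
    measurableSet_blueVia (countable_singleton v)
  have hYmeas : MeasurableSet[labelAlgebra (branch G (j + 1) u v ×ˢ Iic (j + 1))] Y :=
    (labelAlgebra_mono (prod_mono subset_rfl (Iic_subset_Iic.2 j.le_succ)) _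
      (measurableSet_blueVia (toFinite _).countable)).inter
    (measurableSet_labelEvent_labelAlgebra ⟨mem_explored_self, mem_Iic.2 le_rfl⟩)
  have hunion : {ω | BlueVia G (labels ω) (j + 1) {v} u} =
      (X ∩ (labelEvent (u, j + 1))ᶜ) ∪ ((labelEvent (u, 0))ᶜ ∩ Y) := by
    ext ω
    exact blueVia_singleton_succ_iff
  have hdisj : Disjoint (X ∩ (labelEvent (u, j + 1))ᶜ) ((labelEvent (u, 0))ᶜ ∩ Y) :=
    disjoint_left.2 fun ω hωX hωY => hωY.2.1.1 (blueVia_singleton_iff.1 hωX.1).2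
  have hroot : Disjoint {(u, 0)} (branch G (j + 1) u v ×ˢ Iic (j + 1)) :=
    disjoint_singleton_left.2 fun hu =>
      notMem_branch huv ((Nat.cast_le.2 (by lia)).trans_lt hg) hu.1
  have hu₀ : μ.real (labelEvent (u, 0))ᶜ = 1 - p₀ := hμ.real_zero_notMem hp₀
  have huj : μ.real (labelEvent (u, j + 1))ᶜ = 1 - p := hμ.real_succ_notMem hp
  rw [hunion, measureReal_union hdisj (measurableSet_labelEvent.compl.inter
      (labelAlgebra_le _ hYmeas)),
    hμ.real_inter (B := {(u, j + 1)}) (by simp) hXmeas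
      measurableSet_labelEvent_singleton.compl,
    hμ.real_inter hroot measurableSet_labelEvent_singleton.compl hYmeas,
    h.real_blueVia_singleton huv, huj, hu₀,
    h.real_blueVia_inter_labelEvent_succ hμ hp hreg hg huv]

lemma succ (h : HasBranchProbs G μ j a c) (hμ : IsLabelMeasure μ p₀ p) (hp₀ : 0 ≤ p₀) (hp : 0 ≤ p)
    (hreg : IsRegular G r) (hg : ((2 * j + 2 : ℕ) : ℕ∞) < G.egirth) :
    HasBranchProbs G μ (j + 1) (a - p * branchBlueProb r a c)
      (c * (1 - p) + (1 - p₀) * (p * branchBlueProb r a c)) where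
  real_not_branchRelevant := h.real_not_branchRelevant_succ hμ hp hreg hg
  real_blueVia_singleton := h.real_blueVia_singleton_succ hμ hp₀ hp hreg hg

lemma branchBlueProb_mem_Icc (h : HasBranchProbs G μ j a c) (hμ : IsLabelMeasure μ p₀ p)
    (hreg : IsRegular G r) (hg : ((2 * j + 2 : ℕ) : ℕ∞) < G.egirth) (huv : G.Adj u v) :
    branchBlueProb r a c ∈ Icc 0 a := by
  have := hμ.1
  rw [← h.real_blueVia_sdiff_singleton hμ hreg hg huv]
  refine ⟨measureReal_nonneg, ?_⟩
  rw [← h.real_not_branchRelevant huv]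
  exact measureReal_mono fun ω hω => hω.1

end HasBranchProbs

lemma exists_hasBranchProbs [G.LocallyFinite] (hμ : IsLabelMeasure μ p₀ p) (hp₀ : p₀ ∈ Ioo 0 1)
    (hp : p ∈ Ioo 0 1) (hreg : IsRegular G r) (huv : G.Adj u v)
    (hg : ((2 * j : ℕ) : ℕ∞) < G.egirth) :
    ∃ a c, 0 < a ∧ 0 < c ∧ HasBranchProbs G μ j a c := by
  have hp₀' : 0 < 1 - p₀ := sub_pos.2 hp₀.2
  have hp' : 0 < 1 - p := sub_pos.2 hp.2
  induction j with
  | zero => exact ⟨_, _, hp₀', mul_pos hp₀' hp₀.1, hasBranchProbs_zero hμ hp₀.1.le⟩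
  | succ j ih =>
    obtain ⟨a, c, ha, hc, h⟩ := ih ((Nat.cast_le.2 (by lia)).trans_lt hg)
    obtain ⟨hd, hda⟩ := h.branchBlueProb_mem_Icc hμ hreg hg huv
    refine ⟨_, _, ?_, ?_, h.succ hμ hp₀.1.le hp.1.le hreg hg⟩
    · calc 0 < (1 - p) * a := mul_pos hp' ha
        _ ≤ a - p * branchBlueProb r a c := by linarith [mul_le_mul_of_nonneg_left hda hp.1.le]
    · exact add_pos_of_pos_of_nonneg (mul_pos hc hp')
        (mul_nonneg hp₀'.le (mul_nonneg hp.1.le hd))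

end BranchProbabilities

section ColourProbabilities

/-- `w`, `b`, `q`, `s` and `t` are the colour probabilities of an `r`-regular graph at a time with
branch probabilities `a` and `c`, in the sense of `HasBranchProbs`. The two endpoints of an edge
get their colours independently in their branches, which is why `q`, `s` and `t` are products. -/
structure IsColourProbs (r : ℕ) (p₀ a c w b q s t : ℝ) : Prop where
  white : w = (1 - p₀) * a ^ r
  blue : b = r * (c * a ^ (r - 1))
  white_white : q = branchWhiteProb r p₀ a * branchWhiteProb r p₀ a
  blue_white : s = branchBlueProb r a c * branchWhiteProb r p₀ a
  blue_blue : t = branchBlueProb r a c * branchBlueProb r a c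

section

variable {G : SimpleGraph V} {μ : Measure (V → ℕ → Bool)} {p₀ p a c : ℝ}
  {r j : ℕ} {u v : V}

lemma IsLabelMeasure.real_inter_of_branches (hμ : IsLabelMeasure μ p₀ p) (huv : G.Adj u v)
    (hg : ((2 * j + 3 : ℕ) : ℕ∞) < G.egirth) {X Y : Set (V → ℕ → Bool)}
    (hX : MeasurableSet[labelAlgebra (branch G (j + 1) v u ×ˢ Iic j)] X)
    (hY : MeasurableSet[labelAlgebra (branch G (j + 1) u v ×ˢ Iic j)] Y) :
    μ.real (X ∩ Y) = μ.real X * μ.real Y :=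
  hμ.real_inter ((disjoint_branch_symm huv
    ((Nat.cast_le.2 (by lia)).trans_lt hg)).set_prod_left _ _) hX hY

lemma HasBranchProbs.isColourProbs [G.LocallyFinite] (h : HasBranchProbs G μ j a c)
    (hμ : IsLabelMeasure μ p₀ p) (hp₀ : 0 ≤ p₀) (hreg : IsRegular G r)
    (hg : ((2 * j + 3 : ℕ) : ℕ∞) < G.egirth) (huv : G.Adj u v) :
    IsColourProbs r p₀ a c (μ.real (WEv G j u)) (μ.real (BEv G j u))
      (μ.real (WEv G j u ∩ WEv G j v)) (μ.real (BEv G j u ∩ WEv G j v))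
      (μ.real (BEv G j u ∩ BEv G j v)) := by
  have hg' : ((2 * j + 2 : ℕ) : ℕ∞) < G.egirth := (Nat.cast_le.2 (by lia)).trans_lt hg
  have hW {u v : V} (huv : G.Adj u v) := h.real_whiteVia_sdiff_singleton hμ hp₀ hreg hg' huv
  have hB {u v : V} (huv : G.Adj u v) := h.real_blueVia_sdiff_singleton hμ hreg hg' huv
  have hWmeas (u v : V) := measurableSet_whiteVia (G := G) (v := v) (j := j)
    (toFinite (G.neighborSet v \ {u})).countable
  have hBmeas (u v : V) := measurableSet_blueVia (G := G) (v := v) (j := j)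
    (toFinite (G.neighborSet v \ {u})).countable
  refine ⟨?_, ?_, ?_, ?_, ?_⟩
  · rw [← hreg u, ← h.real_whiteVia hμ hp₀ hg' subset_rfl]
    exact congrArg μ.real (ext fun ω => mem_white_iff_whiteVia subset_rfl fun _ hx _ => hx)
  · rw [← hreg u, ← h.real_blueVia hμ hg' subset_rfl]
    exact congrArg μ.real (ext fun ω => mem_blue_iff_blueVia subset_rfl fun _ hx _ => hx)
  · refine .trans ?_ ((hμ.real_inter_of_branches huv hg (hWmeas v u) (hWmeas u v)).trans
      (congrArg₂ (· * ·) (hW huv.symm) (hW huv)))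
    exact congrArg μ.real (ext fun ω => white_and_white_iff)
  · refine .trans ?_ ((hμ.real_inter_of_branches huv hg (hBmeas v u) (hWmeas u v)).trans
      (congrArg₂ (· * ·) (hB huv.symm) (hW huv)))
    exact congrArg μ.real (ext fun ω => blue_and_white_iff)
  · refine .trans ?_ ((hμ.real_inter_of_branches huv hg (hBmeas v u) (hBmeas u v)).trans
      (congrArg₂ (· * ·) (hB huv.symm) (hB huv)))
    exact congrArg μ.real (ext fun ω => blue_and_blue_iff)

end

variable {r : ℕ} {p₀ p a c x w b q s t w' b' q' s' t' : ℝ}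

lemma sub_mul_eq_mul_one_sub {K : Type*} [Field K] {a p d : K} (ha : a ≠ 0) :
    a - p * d = a * (1 - p * (d / a)) := by
  field_simp

lemma branchWhiteProb_mul :
    branchWhiteProb r p₀ (a * x) = branchWhiteProb r p₀ a * x ^ (r - 1) := by
  rw [branchWhiteProb, branchWhiteProb, mul_pow, mul_assoc]

lemma branchBlueProb_mul (hr : 0 < r) (ha : a ≠ 0) {d : ℝ} :
    branchBlueProb r (a * x) (c * (1 - p) + (1 - p₀) * (p * d)) =
      (branchBlueProb r a c * (1 - p) + (r - 1) * p * (d / a) * branchWhiteProb r p₀ a) *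
        x ^ (r - 2) := by
  simp only [branchBlueProb, branchWhiteProb]
  obtain rfl | ⟨n, rfl⟩ : r = 1 ∨ ∃ n, r = n + 2 :=
    (Nat.eq_or_lt_of_le hr).imp Eq.symm Nat.exists_eq_add_of_le'
  · simp
  · rw [show n + 2 - 1 = n + 1 from rfl, Nat.add_sub_cancel, mul_pow]
    field_simp
    ring

namespace IsColourProbs

lemma div_eq (h : IsColourProbs r p₀ a c w b q s t) (hp₀ : p₀ ≠ 1) (ha : a ≠ 0) (hr : 0 < r) :
    s / w = branchBlueProb r a c / a := by
  have : w = branchWhiteProb r p₀ a * a := by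
    rw [h.white, branchWhiteProb, mul_assoc, pow_sub_one_mul hr.ne']
  have hwhite : branchWhiteProb r p₀ a ≠ 0 :=
    mul_ne_zero (sub_ne_zero.2 hp₀.symm) (pow_ne_zero _ ha)
  rw [this, h.blue_white, mul_comm, mul_div_mul_left _ _ hwhite]

lemma mul_div_eq (h : IsColourProbs r p₀ a c w b q s t) (ha : a ≠ 0) (hc : c ≠ 0) (hr : 0 < r) :
    r * p * t / ((r - 1) * b) = p * (branchBlueProb r a c / a) := by
  obtain rfl | ⟨n, rfl⟩ : r = 1 ∨ ∃ n, r = n + 2 :=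
    (Nat.eq_or_lt_of_le hr).imp Eq.symm Nat.exists_eq_add_of_le'
  · simp [branchBlueProb]
  · have hn : ((n + 2 : ℕ) : ℝ) - 1 ≠ 0 :=
      sub_ne_zero.2 (by norm_cast; lia)
    rw [h.blue_blue, h.blue, branchBlueProb, show n + 2 - 1 = n + 1 from rfl, Nat.add_sub_cancel]
    field_simp
    ring

section Succ

variable (h : IsColourProbs r p₀ a c w b q s t)
  (h' : IsColourProbs r p₀ (a - p * branchBlueProb r a c)
    (c * (1 - p) + (1 - p₀) * (p * branchBlueProb r a c)) w' b' q' s' t')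

include h h'

lemma white_succ (hp₀ : p₀ ≠ 1) (ha : a ≠ 0) (hr : 0 < r) : w' = w * (1 - p * s / w) ^ r := by
  rw [mul_div_assoc, h.div_eq hp₀ ha hr, h'.white, h.white, sub_mul_eq_mul_one_sub ha, mul_pow]
  ring

lemma blue_succ (hp₀ : p₀ ≠ 1) (ha : a ≠ 0) (hc : c ≠ 0) (hr : 0 < r) :
    b' = b * (1 - p) * (1 - r * p * t / ((r - 1) * b)) ^ (r - 1) +
      r * p * s * (1 - p * s / w) ^ (r - 1) := by
  rw [h.mul_div_eq ha hc hr, mul_div_assoc p, h.div_eq hp₀ ha hr, h'.blue, h.blue, h.blue_white,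
    sub_mul_eq_mul_one_sub ha, mul_pow, branchWhiteProb]
  ring

lemma white_white_succ (hp₀ : p₀ ≠ 1) (ha : a ≠ 0) (hr : 0 < r) :
    q' = q * (1 - p * s / w) ^ (2 * r - 2) := by
  rw [mul_div_assoc, h.div_eq hp₀ ha hr, h'.white_white, h.white_white, sub_mul_eq_mul_one_sub ha,
    branchWhiteProb_mul, show 2 * r - 2 = (r - 1) + (r - 1) by lia]
  ring

lemma blue_white_succ (hp₀ : p₀ ≠ 1) (ha : a ≠ 0) (hc : c ≠ 0) (hr : 0 < r) :
    s' = s * (1 - p) * (1 - p * s / w) ^ (r - 1) * (1 - r * p * t / ((r - 1) * b)) ^ (r - 2) +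
      (r - 1) * p * q * s / w * (1 - p * s / w) ^ (2 * r - 3) := by
  rw [h.mul_div_eq ha hc hr, mul_div_assoc p, mul_div_assoc (_ * q), h.div_eq hp₀ ha hr,
    h'.blue_white, h.blue_white, h.white_white, sub_mul_eq_mul_one_sub ha,
    branchWhiteProb_mul, branchBlueProb_mul hr ha, show 2 * r - 3 = (r - 2) + (r - 1) by lia]
  ring

lemma blue_blue_succ (hp₀ : p₀ ≠ 1) (ha : a ≠ 0) (hc : c ≠ 0) (hr : 0 < r) :
    t' = t * (1 - p) ^ 2 * (1 - r * p * t / ((r - 1) * b)) ^ (2 * r - 4) +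
      2 * s * (1 - p) * (1 - r * p * t / ((r - 1) * b)) ^ (r - 2) * ((r - 1) * p * s / w) *
        (1 - p * s / w) ^ (r - 2) +
      q * ((r - 1) ^ 2 * p ^ 2 * s ^ 2 / w ^ 2) * (1 - p * s / w) ^ (2 * r - 4) := by
  rw [h.mul_div_eq ha hc hr, mul_div_assoc p, mul_div_assoc (_ * p), mul_div_assoc (_ * p ^ 2),
    ← div_pow, h.div_eq hp₀ ha hr, h'.blue_blue, h.blue_blue, h.blue_white, h.white_white,
    sub_mul_eq_mul_one_sub ha, branchBlueProb_mul hr ha,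
    show 2 * r - 4 = (r - 2) + (r - 2) by lia]
  ring

end Succ

end IsColourProbs

end ColourProbabilities

theorem recurrences_for_probabilities_general
    (r : ℕ) (G : SimpleGraph V) [G.LocallyFinite] (hreg : IsRegular G r)
    (p₀ p : ℝ) (hp₀ : p₀ ∈ Ioo (0 : ℝ) 1) (hp : p ∈ Ioo (0 : ℝ) 1)
    (μ : Measure (V → ℕ → Bool)) (hμ : IsLabelMeasure μ p₀ p)
    (i : ℕ) (hi : 1 ≤ i) (hg : ((2 * i + 3 : ℕ) : ℕ∞) < G.egirth)
    (u v : V) (huv : G.Adj u v)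
    (w1 b1 q1 s1 t1 w2 b2 q2 s2 t2 : ℝ)
    (hw1 : w1 = (μ (WEv G (i - 1) u)).toReal)
    (hb1 : b1 = (μ (BEv G (i - 1) u)).toReal)
    (hq1 : q1 = (μ (WEv G (i - 1) u ∩ WEv G (i - 1) v)).toReal)
    (hs1 : s1 = (μ (BEv G (i - 1) u ∩ WEv G (i - 1) v)).toReal)
    (ht1 : t1 = (μ (BEv G (i - 1) u ∩ BEv G (i - 1) v)).toReal)
    (hw2 : w2 = (μ (WEv G i u)).toReal)
    (hb2 : b2 = (μ (BEv G i u)).toReal)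
    (hq2 : q2 = (μ (WEv G i u ∩ WEv G i v)).toReal)
    (hs2 : s2 = (μ (BEv G i u ∩ WEv G i v)).toReal)
    (ht2 : t2 = (μ (BEv G i u ∩ BEv G i v)).toReal) :
    w2 = w1 * (1 - p * s1 / w1) ^ r ∧
    b2 = b1 * (1 - p) * (1 - r * p * t1 / (((r : ℝ) - 1) * b1)) ^ (r - 1)
        + r * p * s1 * (1 - p * s1 / w1) ^ (r - 1) ∧
    q2 = q1 * (1 - p * s1 / w1) ^ (2 * r - 2) ∧
    s2 = s1 * (1 - p) * (1 - p * s1 / w1) ^ (r - 1)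
          * (1 - r * p * t1 / (((r : ℝ) - 1) * b1)) ^ (r - 2)
        + ((r : ℝ) - 1) * p * q1 * s1 / w1 * (1 - p * s1 / w1) ^ (2 * r - 3) ∧
    t2 = t1 * (1 - p) ^ 2 * (1 - r * p * t1 / (((r : ℝ) - 1) * b1)) ^ (2 * r - 4)
        + 2 * s1 * (1 - p) * (1 - r * p * t1 / (((r : ℝ) - 1) * b1)) ^ (r - 2)
          * (((r : ℝ) - 1) * p * s1 / w1) * (1 - p * s1 / w1) ^ (r - 2)
        + q1 * (((r : ℝ) - 1) ^ 2 * p ^ 2 * s1 ^ 2 / w1 ^ 2)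
          * (1 - p * s1 / w1) ^ (2 * r - 4) := by
  obtain ⟨j, rfl⟩ := Nat.exists_eq_add_of_le' hi
  subst hw1 hb1 hq1 hs1 ht1 hw2 hb2 hq2 hs2 ht2
  have girth_gt {k : ℕ} (hk : k ≤ 2 * (j + 1) + 3) : (k : ℕ∞) < G.egirth :=
    (Nat.cast_le.2 hk).trans_lt hg
  obtain ⟨a, c, ha, hc, hprobs⟩ :=
    exists_hasBranchProbs (j := j) hμ hp₀ hp hreg huv (girth_gt (by lia))
  have hprobs' := hprobs.succ hμ hp₀.1.le hp.1.le hreg (girth_gt (by lia))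
  have h := hprobs.isColourProbs hμ hp₀.1.le hreg (girth_gt (by lia)) huv
  have h' := hprobs'.isColourProbs hμ hp₀.1.le hreg hg huv
  have hr := hreg.pos_of_adj huv
  have hp₀' := hp₀.2.ne
  exact ⟨h.white_succ h' hp₀' ha.ne' hr, h.blue_succ h' hp₀' ha.ne' hc.ne' hr,
    h.white_white_succ h' hp₀' ha.ne' hr, h.blue_white_succ h' hp₀' ha.ne' hc.ne' hr,
    h.blue_blue_succ h' hp₀' ha.ne' hc.ne' hr⟩

/-- The recurrences satisfied by `w_i, b_i, q_i, s_i, t_i`, where the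
quantities are computed from any vertex `u` and neighbour `v`. -/
theorem recurrences_for_probabilities
    [Fintype V] (r g : ℕ) (G : SimpleGraph V)
    (hreg : IsRegular G r) (hg : (g : ℕ∞) ≤ G.egirth)
    (p₀ p : ℝ) (hp₀ : p₀ ∈ Ioo (0 : ℝ) 1) (hp : p ∈ Ioo (0 : ℝ) 1)
    (μ : Measure (V → ℕ → Bool)) (hμ : IsLabelMeasure μ p₀ p)
    (i : ℕ) (hi : 1 ≤ i) (hi1 : 2 * i < g - 3) (hi2 : 2 * (i + 2) < g - 2)
    (u v : V) (huv : G.Adj u v)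
    (w1 b1 q1 s1 t1 w2 b2 q2 s2 t2 : ℝ)
    (hw1 : w1 = (μ (WEv G (i - 1) u)).toReal)
    (hb1 : b1 = (μ (BEv G (i - 1) u)).toReal)
    (hq1 : q1 = (μ (WEv G (i - 1) u ∩ WEv G (i - 1) v)).toReal)
    (hs1 : s1 = (μ (BEv G (i - 1) u ∩ WEv G (i - 1) v)).toReal)
    (ht1 : t1 = (μ (BEv G (i - 1) u ∩ BEv G (i - 1) v)).toReal)
    (hw2 : w2 = (μ (WEv G i u)).toReal)
    (hb2 : b2 = (μ (BEv G i u)).toReal)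
    (hq2 : q2 = (μ (WEv G i u ∩ WEv G i v)).toReal)
    (hs2 : s2 = (μ (BEv G i u ∩ WEv G i v)).toReal)
    (ht2 : t2 = (μ (BEv G i u ∩ BEv G i v)).toReal) :
    w2 = w1 * (1 - p * s1 / w1) ^ r ∧
    b2 = b1 * (1 - p) * (1 - r * p * t1 / (((r : ℝ) - 1) * b1)) ^ (r - 1)
        + r * p * s1 * (1 - p * s1 / w1) ^ (r - 1) ∧
    q2 = q1 * (1 - p * s1 / w1) ^ (2 * r - 2) ∧
    s2 = s1 * (1 - p) * (1 - p * s1 / w1) ^ (r - 1)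
          * (1 - r * p * t1 / (((r : ℝ) - 1) * b1)) ^ (r - 2)
        + ((r : ℝ) - 1) * p * q1 * s1 / w1 * (1 - p * s1 / w1) ^ (2 * r - 3) ∧
    t2 = t1 * (1 - p) ^ 2 * (1 - r * p * t1 / (((r : ℝ) - 1) * b1)) ^ (2 * r - 4)
        + 2 * s1 * (1 - p) * (1 - r * p * t1 / (((r : ℝ) - 1) * b1)) ^ (r - 2)
          * (((r : ℝ) - 1) * p * s1 / w1) * (1 - p * s1 / w1) ^ (r - 2)
        + q1 * (((r : ℝ) - 1) ^ 2 * p ^ 2 * s1 ^ 2 / w1 ^ 2)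
          * (1 - p * s1 / w1) ^ (2 * r - 4) := by
  classical
  let _ : G.LocallyFinite := fun _ => Fintype.ofFinite _
  exact recurrences_for_probabilities_general r G hreg p₀ p hp₀ hp μ hμ i hi
    ((Nat.cast_lt.2 (by lia)).trans_le hg) u v huv w1 b1 q1 s1 t1 w2 b2 q2 s2 t2
    hw1 hb1 hq1 hs1 ht1 hw2 hb2 hq2 hs2 ht2

end InducedForest
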